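/- Let G = (V,E) be a locally finite graph carrying the observation model with side information coupled across ε, and let S ⊆ V be a finite nonempty set. Then for every ε ∈ [0,1]: ∑_{u∈S} ∫_0^ε I( θ_u ; θ_{∂S} | Y^{(ε')}_S ) dε' ≤ log|X| · |∂S|, where θ_{∂S} = (θ_v)_{v∈∂S} and ∂S = {u ∈ S : ∃v ∉ S, (u,v) ∈ E}. -/

import Mathlib

open MeasureTheory ProbabilityTheory Filter
open scoped ENNReal Classical

noncomputable section

def gball {V : Type*} (G : SimpleGraph V) (u : V) (l : ℕ) : Set V :=
  {v | ∃ w : G.Walk u v, w.length ≤ l}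

def vBoundary {V : Type*} (G : SimpleGraph V) (S : Set V) : Set V :=
  {u | u ∈ S ∧ ∃ v, v ∉ S ∧ G.Adj u v}

def Amenable {V : Type*} (G : SimpleGraph V) : Prop :=
  ∀ δ : ℝ, 0 < δ → ∃ S : Set V, S.Finite ∧ S.Nonempty ∧
    ((vBoundary G S).ncard : ℝ) < δ * (S.ncard : ℝ)

def VertexTransitive {V : Type*} (G : SimpleGraph V) : Prop :=
  ∀ u v : V, ∃ φ : G ≃g G, φ u = v

def LocallyFiniteGraph {V : Type*} (G : SimpleGraph V) : Prop :=
  ∀ v : V, (G.neighborSet v).Finite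

def graphOf {V : Type*} (E : Set (V × V)) : SimpleGraph V :=
  SimpleGraph.fromRel (fun u v => (u, v) ∈ E)

def BallIso {V W : Type*} (G : SimpleGraph V) (u : V) (H : SimpleGraph W) (o : W)
    (l : ℕ) : Prop :=
  ∃ φ : gball G u l ≃ gball H o l,
    (∀ hu : u ∈ gball G u l, ((φ ⟨u, hu⟩ : gball H o l) : W) = o) ∧
      ∀ a b : gball G u l, G.Adj a b ↔ H.Adj (φ a) (φ b)

def LocalWeakLimit {W : Type*} (Gn : ∀ n : ℕ, SimpleGraph (Fin n))
    (H : SimpleGraph W) (o : W) : Prop :=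
  ∀ l : ℕ, Tendsto
    (fun n : ℕ => (Nat.card {u : Fin n // BallIso (Gn n) u H o l} : ℝ) / n) atTop (nhds 1)

structure Model (X Y' : Type*) {V : Type*} (Q : X → X → Y' → ℝ) (E : Set (V × V))
    [Fintype X] [Fintype Y'] where
  Ω : Type
  mΩ : MeasurableSpace Ω
  P : @Measure Ω mΩ
  probP : @IsProbabilityMeasure Ω mΩ P
  θ : V → Ω → X
  Yobs : V × V → Ω → Y'
  U : V → Ω → ℝ
  measθ : ∀ v, @Measurable Ω X mΩ ⊤ (θ v)
  measY : ∀ e, @Measurable Ω Y' mΩ ⊤ (Yobs e)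
  measU : ∀ v, @Measurable Ω ℝ mΩ _ (U v)
  lawθY : ∀ (S : Finset V) (F : Finset (V × V)),
    (∀ e ∈ F, e ∈ E ∧ e.1 ∈ S ∧ e.2 ∈ S) →
    ∀ (σ : V → X) (y : V × V → Y'),
      (P {ω | (∀ v ∈ S, θ v ω = σ v) ∧ ∀ e ∈ F, Yobs e ω = y e}).toReal
        = ((Fintype.card X : ℝ)⁻¹) ^ S.card * ∏ e ∈ F, Q (σ e.1) (σ e.2) (y e)
  lawU : ∀ (T : Finset V) (a : V → ℝ), (∀ v, a v ∈ Set.Icc (0:ℝ) 1) →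
    ∀ (S : Finset V) (F : Finset (V × V)) (σ : V → X) (y : V × V → Y'),
      (P {ω | (∀ v ∈ T, U v ω ≤ a v) ∧ (∀ v ∈ S, θ v ω = σ v) ∧
          ∀ e ∈ F, Yobs e ω = y e}).toReal
        = (∏ v ∈ T, a v) *
          (P {ω | (∀ v ∈ S, θ v ω = σ v) ∧ ∀ e ∈ F, Yobs e ω = y e}).toReal

attribute [instance] Model.mΩ

namespace Model

variable {X Y' V : Type*} [Fintype X] [Fintype Y'] {Q : X → X → Y' → ℝ} {E : Set (V × V)}

def ξ (M : Model X Y' Q E) (ε : ℝ) (v : V) (ω : M.Ω) : Option X :=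
  if M.U v ω ≤ ε then some (M.θ v ω) else none

def obsAlg (M : Model X Y' Q E) (ε : ℝ) (S : Set V) : MeasurableSpace M.Ω :=
  (⨆ e ∈ {e : V × V | e ∈ E ∧ e.1 ∈ S ∧ e.2 ∈ S}, MeasurableSpace.comap (M.Yobs e) ⊤) ⊔
    ⨆ v ∈ S, MeasurableSpace.comap (M.ξ ε v) ⊤

def marg (M : Model X Y' Q E) (ε : ℝ) (S : Set V) (u : V) (x : X) : M.Ω → ℝ :=
  M.P[Set.indicator {ω | M.θ u ω = x} (fun _ => (1 : ℝ)) | M.obsAlg ε S]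

end Model

def riskOf {X Y' : Type*} [Fintype X] [Fintype Y'] {n : ℕ} {Q : X → X → Y' → ℝ}
    {E : Set (Fin n × Fin n)} (M : Model X Y' Q E) (f : X → ℝ)
    (Xh : M.Ω → Fin n → Fin n → ℝ) : ℝ :=
  ((n : ℝ) ^ 2)⁻¹ * ∫ ω, (∑ u, ∑ v, (f (M.θ u ω) * f (M.θ v ω) - Xh ω u v) ^ 2) ∂M.P


/-- Shannon entropy of (the law of) a random variable with (essentially) finitely many
values, with the convention 0 log 0 = 0. -/
def entropy {Ω α : Type*} [MeasurableSpace Ω] (P : Measure Ω) (Z : Ω → α) : ℝ :=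
  -∑' a : α, ((P (Z ⁻¹' {a})).toReal * Real.log (P (Z ⁻¹' {a})).toReal)

/-- Conditional mutual information I(A;B|C) = H(A,C) + H(B,C) - H(A,B,C) - H(C). -/
def condMI {Ω α β γ : Type*} [MeasurableSpace Ω] (P : Measure Ω)
    (A : Ω → α) (B : Ω → β) (C : Ω → γ) : ℝ :=
  entropy P (fun ω => (A ω, C ω)) + entropy P (fun ω => (B ω, C ω))
    - entropy P (fun ω => (A ω, B ω, C ω)) - entropy P C

namespace Model

variable {X Y' V : Type*} [Fintype X] [Fintype Y'] {Q : X → X → Y' → ℝ} {E : Set (V × V)}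

/-- The labels on a subset of vertices, as a single (masked) random variable. -/
def thetaOn (M : Model X Y' Q E) (S : Set V) : M.Ω → (V → Option X) :=
  fun ω v => if v ∈ S then some (M.θ v ω) else none

/-- All the observations available in the region S (edge observations on edges inside S
and side information on S), as a single (masked) random variable. -/
def obsRV (M : Model X Y' Q E) (ε : ℝ) (S : Set V) :
    M.Ω → (V × V → Option Y') × (V → Option (Option X)) :=
  fun ω =>
    (fun e => if e ∈ E ∧ e.1 ∈ S ∧ e.2 ∈ S then some (M.Yobs e ω) else none,
     fun v => if v ∈ S then some (M.ξ ε v ω) else none)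

end Model
/-- A random variable with finite range and measurable fibres. -/
def IsSimpleRV {Ω α : Type*} [MeasurableSpace Ω] (Z : Ω → α) : Prop :=
  (Set.range Z).Finite ∧ ∀ z, MeasurableSet (Z ⁻¹' {z})

section Entropy

variable {Ω α β γ ι : Type*} [MeasurableSpace Ω] {P : Measure Ω}

lemma IsSimpleRV.prodMk {Z : Ω → α} {W : Ω → β} (hZ : IsSimpleRV Z) (hW : IsSimpleRV W) :
    IsSimpleRV (fun ω => (Z ω, W ω)) := by
  refine ⟨(hZ.1.prod hW.1).subset ?_, fun z => ?_⟩
  · rintro _ ⟨ω, rfl⟩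
    exact ⟨⟨ω, rfl⟩, ⟨ω, rfl⟩⟩
  · have : (fun ω => (Z ω, W ω)) ⁻¹' {z} = Z ⁻¹' {z.1} ∩ W ⁻¹' {z.2} := by
      ext ω
      simp [Prod.ext_iff]
    rw [this]
    exact (hZ.2 _).inter (hW.2 _)

lemma IsSimpleRV.of_factor [Finite γ] {W : Ω → γ} (hW : ∀ k, MeasurableSet (W ⁻¹' {k}))
    {Z : Ω → α} (h : ∀ ω ω', W ω = W ω' → Z ω = Z ω') : IsSimpleRV Z := by
  obtain ⟨f, hf⟩ : ∃ f : Set.range W → α, ∀ ω, f ⟨W ω, ω, rfl⟩ = Z ω :=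
    ⟨fun k => Z k.2.choose, fun ω => h _ _ (Exists.choose_spec (⟨ω, rfl⟩ : ∃ y, W y = W ω))⟩
  refine ⟨(Set.finite_range f).subset ?_, fun z => ?_⟩
  · rintro _ ⟨ω, rfl⟩
    exact ⟨_, hf ω⟩
  · have : Z ⁻¹' {z} = ⋃ k ∈ W '' (Z ⁻¹' {z}), W ⁻¹' {k} := by
      ext ω
      simp only [Set.mem_preimage, Set.mem_singleton_iff, Set.mem_image, Set.mem_iUnion,
        exists_prop]
      constructor
      · exact fun hω => ⟨W ω, ⟨ω, hω, rfl⟩, rfl⟩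
      · rintro ⟨k, ⟨ω', h1, h2⟩, h3⟩
        rw [← h1]
        exact h _ _ (h3.trans h2.symm)
    rw [this]
    exact (Set.toFinite _).measurableSet_biUnion fun k _ => hW k

lemma entropy_eq_tsum_negMulLog (P : Measure Ω) (Z : Ω → α) :
    entropy P Z = ∑' a, Real.negMulLog (P.real (Z ⁻¹' {a})) := by
  simp only [entropy, Real.negMulLog, neg_mul, tsum_neg, Measure.real]

lemma entropy_eq_sum_negMulLog (P : Measure Ω) {Z : Ω → α} {s : Finset α}
    (hs : ∀ ω, Z ω ∈ s) :
    entropy P Z = ∑ a ∈ s, Real.negMulLog (P.real (Z ⁻¹' {a})) := by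
  rw [entropy_eq_tsum_negMulLog]
  refine tsum_eq_sum fun a ha => ?_
  have : Z ⁻¹' {a} = ∅ := by
    ext ω
    simp only [Set.mem_preimage, Set.mem_singleton_iff, Set.mem_empty_iff_false, iff_false]
    rintro rfl
    exact ha (hs ω)
  simp [this]

lemma entropy_eq_tsum_quotient (P : Measure Ω) (Z : Ω → α) :
    entropy P Z = ∑' q : Quotient (Setoid.ker Z),
      Real.negMulLog (P.real {ω | (Quotient.mk _ ω : Quotient (Setoid.ker Z)) = q}) := by
  rw [entropy_eq_tsum_negMulLog, ← tsum_subtype_eq_of_support_subset (s := Set.range Z),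
    ← (Setoid.quotientKerEquivRange Z).tsum_eq]
  · refine tsum_congr fun q => ?_
    induction q using Quotient.inductionOn with
    | h ω₀ =>
      congr 2
      ext ω
      simp only [Set.mem_preimage, Set.mem_singleton_iff, Set.mem_ofPred_eq, Quotient.eq]
      rfl
  · intro a ha
    by_contra hne
    have : Z ⁻¹' {a} = ∅ := by
      ext ω
      simp only [Set.mem_preimage, Set.mem_singleton_iff, Set.mem_empty_iff_false, iff_false]
      rintro rfl
      exact hne ⟨ω, rfl⟩
    simp [this] at ha

lemma entropy_congr_ker (P : Measure Ω) {Z : Ω → α} {W : Ω → β}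
    (h : ∀ ω ω', Z ω = Z ω' ↔ W ω = W ω') : entropy P Z = entropy P W := by
  have hk : Setoid.ker Z = Setoid.ker W := Setoid.ext fun ω ω' => h ω ω'
  rw [entropy_eq_tsum_quotient, entropy_eq_tsum_quotient, hk]

lemma sum_measureReal_inter_fiber [IsFiniteMeasure P] {Z : Ω → α}
    (hZ : ∀ z, MeasurableSet (Z ⁻¹' {z})) {s : Finset α} (hs : ∀ ω, Z ω ∈ s) (t : Set Ω) :
    ∑ z ∈ s, P.real (Z ⁻¹' {z} ∩ t) = P.real t := by
  have h := sum_measureReal_preimage_singleton (μ := P.restrict t) s (f := Z) fun z _ => hZ z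
  simp only [measureReal_restrict_apply (hZ _)] at h
  rw [h, show Z ⁻¹' (s : Set α) = Set.univ from Set.eq_univ_of_forall hs]
  simp [Measure.real]

lemma negMulLog_mutualInfo_nonneg (s : Finset α) (t : Finset β) (p : α → β → ℝ)
    (hp : ∀ a b, 0 ≤ p a b) :
    0 ≤ ∑ a ∈ s, Real.negMulLog (∑ b ∈ t, p a b) + ∑ b ∈ t, Real.negMulLog (∑ a ∈ s, p a b)
      - ∑ a ∈ s, ∑ b ∈ t, Real.negMulLog (p a b)
      - Real.negMulLog (∑ a ∈ s, ∑ b ∈ t, p a b) := by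
  set r : α → ℝ := fun a => ∑ b ∈ t, p a b with hr
  set c : β → ℝ := fun b => ∑ a ∈ s, p a b with hc
  set T : ℝ := ∑ a ∈ s, r a with hT
  have hcT : ∑ b ∈ t, c b = T := Finset.sum_comm
  have key : ∀ a ∈ s, ∀ b ∈ t, p a b - r a * c b / T ≤
      p a b * Real.log (p a b) - p a b * Real.log (r a) - p a b * Real.log (c b)
        + p a b * Real.log T := by
    intro a ha b hb
    have hr0 : p a b ≤ r a := Finset.single_le_sum (fun b _ => hp a b) hb
    have hc0 : p a b ≤ c b := Finset.single_le_sum (f := fun a => p a b) (fun a _ => hp a b) ha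
    have hT0 : r a ≤ T :=
      Finset.single_le_sum (f := r) (fun a _ => Finset.sum_nonneg fun b _ => hp a b) ha
    rcases (hp a b).eq_or_lt with h0 | h0
    · rw [← h0] at hr0 hc0 ⊢
      have : 0 ≤ r a * c b / T := by
        have := hr0.trans hT0
        positivity
      simpa using this
    · have hr1 := h0.trans_le hr0
      have hc1 := h0.trans_le hc0
      have hT1 := hr1.trans_le hT0
      have hl := Real.log_le_sub_one_of_pos (x := r a * c b / (p a b * T)) (by positivity)
      rw [Real.log_div (by positivity) (by positivity), Real.log_mul hr1.ne' hc1.ne',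
        Real.log_mul h0.ne' hT1.ne'] at hl
      have := mul_le_mul_of_nonneg_left hl h0.le
      have he : p a b * (r a * c b / (p a b * T) - 1) = r a * c b / T - p a b := by
        field_simp
      linarith
  have hsum := Finset.sum_le_sum fun a ha => Finset.sum_le_sum (key a ha)
  have h1 : ∑ a ∈ s, ∑ b ∈ t, (p a b - r a * c b / T) = 0 := by
    have : ∑ a ∈ s, ∑ b ∈ t, (p a b - r a * c b / T) = T - T * T / T := by
      simp only [Finset.sum_sub_distrib, ← Finset.sum_div, ← Finset.mul_sum, hcT,
        ← Finset.sum_mul]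
      rfl
    rw [this]
    by_cases h : T = 0
    · simp [h]
    · field_simp
      simp
  have h2 : ∑ a ∈ s, ∑ b ∈ t, (p a b * Real.log (p a b) - p a b * Real.log (r a)
      - p a b * Real.log (c b) + p a b * Real.log T) =
      ∑ a ∈ s, Real.negMulLog (r a) + ∑ b ∈ t, Real.negMulLog (c b)
      - ∑ a ∈ s, ∑ b ∈ t, Real.negMulLog (p a b) - Real.negMulLog T := by
    have h3 : ∑ a ∈ s, ∑ b ∈ t, p a b * Real.log (c b) = ∑ b ∈ t, c b * Real.log (c b) := by
      rw [Finset.sum_comm]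
      simp only [← Finset.sum_mul, hc]
    simp only [Finset.sum_add_distrib, Finset.sum_sub_distrib, h3, Real.negMulLog, neg_mul,
      Finset.sum_neg_distrib]
    simp only [← Finset.sum_mul]
    rw [← hT]
    ring
  rw [h1, h2] at hsum
  exact hsum

lemma condMI_nonneg [IsFiniteMeasure P] {A : Ω → α} {B : Ω → β} {C : Ω → γ}
    (hA : IsSimpleRV A) (hB : IsSimpleRV B) (hC : IsSimpleRV C) : 0 ≤ condMI P A B C := by
  have hA' : ∀ ω, A ω ∈ hA.1.toFinset := fun ω => by simp
  have hB' : ∀ ω, B ω ∈ hB.1.toFinset := fun ω => by simp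
  have hC' : ∀ ω, C ω ∈ hC.1.toFinset := fun ω => by simp
  set s := hA.1.toFinset
  set t := hB.1.toFinset
  set w := hC.1.toFinset
  have hAC : ∀ a c, (fun ω => (A ω, C ω)) ⁻¹' {(a, c)} = A ⁻¹' {a} ∩ C ⁻¹' {c} := by
    intro a c; ext ω; simp
  have hBC : ∀ b c, (fun ω => (B ω, C ω)) ⁻¹' {(b, c)} = B ⁻¹' {b} ∩ C ⁻¹' {c} := by
    intro b c; ext ω; simp
  have hABC : ∀ a b c, (fun ω => (A ω, B ω, C ω)) ⁻¹' {(a, b, c)}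
      = A ⁻¹' {a} ∩ (B ⁻¹' {b} ∩ C ⁻¹' {c}) := by
    intro a b c; ext ω; simp
  rw [condMI, entropy_eq_sum_negMulLog P (s := s ×ˢ w) (by simp [hA', hC']),
    entropy_eq_sum_negMulLog P (s := t ×ˢ w) (by simp [hB', hC']),
    entropy_eq_sum_negMulLog P (s := s ×ˢ t ×ˢ w) (by simp [hA', hB', hC']),
    entropy_eq_sum_negMulLog P hC']
  simp only [Finset.sum_product_right, hAC, hBC, hABC]
  rw [Finset.sum_congr rfl fun c _ => Finset.sum_comm, ← Finset.sum_add_distrib,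
    ← Finset.sum_sub_distrib, ← Finset.sum_sub_distrib]
  refine Finset.sum_nonneg fun c _ => ?_
  have h := negMulLog_mutualInfo_nonneg s t
    (fun a b => P.real (A ⁻¹' {a} ∩ (B ⁻¹' {b} ∩ C ⁻¹' {c}))) fun a b => measureReal_nonneg
  have h1 : ∀ a, ∑ b ∈ t, P.real (A ⁻¹' {a} ∩ (B ⁻¹' {b} ∩ C ⁻¹' {c}))
      = P.real (A ⁻¹' {a} ∩ C ⁻¹' {c}) := fun a => by
    rw [← sum_measureReal_inter_fiber hB.2 hB']
    simp only [Set.inter_left_comm]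
  simp only [h1, sum_measureReal_inter_fiber hA.2 hA'] at h
  exact h

lemma entropy_le_entropy_prod [IsFiniteMeasure P] {B : Ω → β} {C : Ω → γ}
    (hB : IsSimpleRV B) (hC : IsSimpleRV C) :
    entropy P C ≤ entropy P (fun ω => (B ω, C ω)) := by
  have h := condMI_nonneg (P := P) hB hB hC
  rw [condMI, entropy_congr_ker P (Z := fun ω => (B ω, B ω, C ω)) (W := fun ω => (B ω, C ω))
    (by simp)] at h
  linarith

lemma entropy_prod_le_add [IsProbabilityMeasure P] {B : Ω → β} {C : Ω → γ}
    (hB : IsSimpleRV B) (hC : IsSimpleRV C) :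
    entropy P (fun ω => (B ω, C ω)) ≤ entropy P B + entropy P C := by
  have h := condMI_nonneg (P := P) (C := fun _ : Ω => ()) hB hC
    ⟨Set.toFinite _, fun z => by simp⟩
  rw [condMI, entropy_congr_ker P (Z := fun ω => (B ω, C ω, ())) (W := fun ω => (B ω, C ω))
    (by simp), entropy_congr_ker P (Z := fun ω => (B ω, ())) (W := B) (by simp),
    entropy_congr_ker P (Z := fun ω => (C ω, ())) (W := C) (by simp)] at h
  have h0 : entropy P (fun _ : Ω => ()) = 0 := by
    rw [entropy_eq_tsum_negMulLog]
    simp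
  linarith

/-- The entropy of a random variable selected by an independent index that can be read off
from its value. -/
lemma entropy_mixture [IsProbabilityMeasure P] {T : Finset ι} {R : Ω → ι} {w : ι → ℝ}
    {Z : Ω → α} {Zi : ι → Ω → α} (hRT : ∀ ω, R ω ∈ T) (hZ : ∀ ω, Z ω = Zi (R ω) ω)
    (ρ : α → ι) (hρ : ∀ i ∈ T, ∀ ω, ρ (Zi i ω) = i) (hs : ∀ i ∈ T, IsSimpleRV (Zi i))
    (hind : ∀ i ∈ T, ∀ z, P.real (R ⁻¹' {i} ∩ Zi i ⁻¹' {z}) = w i * P.real (Zi i ⁻¹' {z})) :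
    entropy P Z = ∑ i ∈ T, w i * entropy P (Zi i) + ∑ i ∈ T, Real.negMulLog (w i) := by
  set F : Finset α := T.attach.biUnion fun i => (hs i i.2).1.toFinset with hF
  have hiF : ∀ i ∈ T, ∀ ω, Zi i ω ∈ F := fun i hi ω => by
    simp only [hF, Finset.mem_biUnion, Set.Finite.mem_toFinset]
    exact ⟨⟨i, hi⟩, Finset.mem_attach _ _, ω, rfl⟩
  rw [entropy_eq_sum_negMulLog P (s := F) fun ω => hZ ω ▸ hiF _ (hRT ω) ω]
  have hterm : ∀ z ∈ F, Real.negMulLog (P.real (Z ⁻¹' {z})) =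
      ∑ i ∈ T, Real.negMulLog (w i * P.real (Zi i ⁻¹' {z})) := by
    intro z hz
    obtain ⟨i, -, hi⟩ := Finset.mem_biUnion.1 hz
    obtain ⟨ω₀, rfl⟩ := (Set.Finite.mem_toFinset _).1 hi
    rw [Finset.sum_eq_single_of_mem i.1 i.2, ← hind _ i.2]
    · congr 2
      ext ω
      simp only [Set.mem_preimage, Set.mem_singleton_iff, Set.mem_inter_iff, hZ]
      constructor
      · intro h
        have hR : R ω = i := by rw [← hρ _ (hRT ω) ω, h, hρ _ i.2]
        exact ⟨hR, hR ▸ h⟩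
      · rintro ⟨h1, h2⟩
        rw [h1, h2]
    · intro j hj hji
      have : Zi j ⁻¹' {Zi i ω₀} = ∅ := by
        ext ω
        simp only [Set.mem_preimage, Set.mem_singleton_iff, Set.mem_empty_iff_false, iff_false]
        intro h
        exact hji (by rw [← hρ j hj ω, h, hρ _ i.2])
      simp [this]
  rw [Finset.sum_congr rfl hterm, Finset.sum_comm, ← Finset.sum_add_distrib]
  refine Finset.sum_congr rfl fun i hi => ?_
  have h1 : ∑ z ∈ F, P.real (Zi i ⁻¹' {z}) = 1 := by
    simpa using sum_measureReal_inter_fiber (P := P) (hs i hi).2 (hiF i hi) Set.univ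
  simp only [Real.negMulLog_mul, Finset.sum_add_distrib, ← Finset.sum_mul, ← Finset.mul_sum, h1,
    entropy_eq_sum_negMulLog P (hiF i hi)]
  ring

/-- A random variable uniform on its range. -/
lemma entropy_of_uniform [IsProbabilityMeasure P] {Z : Ω → α} (hZ : IsSimpleRV Z) {c : ℝ}
    (h : ∀ ω₀, P.real (Z ⁻¹' {Z ω₀}) = c) : entropy P Z = -Real.log c := by
  have hF : ∀ ω, Z ω ∈ hZ.1.toFinset := fun ω => by simp
  have h1 := sum_measureReal_inter_fiber (P := P) hZ.2 hF Set.univ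
  simp only [Set.inter_univ, probReal_univ] at h1
  rw [entropy_eq_sum_negMulLog P hF, ← mul_one (-Real.log c), ← h1, Finset.mul_sum]
  refine Finset.sum_congr rfl fun z hz => ?_
  obtain ⟨ω₀, rfl⟩ := (Set.Finite.mem_toFinset _).1 hz
  rw [h, Real.negMulLog]
  ring

end Entropy

section RandomSubset

variable {V : Type*}

/-- The probability that including each element of `S` independently with probability `t`
produces the subset `A`. -/
def subsetWeight (t : ℝ) (S A : Finset V) : ℝ :=
  ∏ v ∈ S, if v ∈ A then t else 1 - t

lemma subsetWeight_nonneg {t : ℝ} (ht : t ∈ Set.Icc (0 : ℝ) 1) (S A : Finset V) :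
    0 ≤ subsetWeight t S A :=
  Finset.prod_nonneg fun v _ => by
    split_ifs
    exacts [ht.1, sub_nonneg.2 ht.2]

lemma subsetWeight_insert_right (t : ℝ) {S : Finset V} {u : V} (hu : u ∉ S) (A : Finset V) :
    subsetWeight t S (insert u A) = subsetWeight t S A :=
  Finset.prod_congr rfl fun v hv => by
    have : v ≠ u := fun h => hu (h ▸ hv)
    simp [this]

lemma continuous_subsetWeight (S A : Finset V) : Continuous fun t => subsetWeight t S A :=
  continuous_finsetProd _ fun v _ => by split_ifs <;> fun_prop

lemma hasDerivAt_subsetWeight (S A : Finset V) (t : ℝ) :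
    HasDerivAt (fun t => subsetWeight t S A)
      (∑ u ∈ S, subsetWeight t (S.erase u) A * if u ∈ A then 1 else -1) t := by
  unfold subsetWeight
  have h := HasDerivAt.fun_finsetProd (𝕜 := ℝ) (x := t) (u := S)
    (f := fun v t => if v ∈ A then t else 1 - t)
    (f' := fun v => if v ∈ A then (1 : ℝ) else -1) fun v _ => by
      split_ifs
      · exact hasDerivAt_id t
      · exact (hasDerivAt_id t).const_sub 1
  simpa only [smul_eq_mul] using h

lemma sum_powerset_erase {S : Finset V} {u : V} (hu : u ∈ S) (f : Finset V → ℝ) :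
    ∑ A ∈ S.powerset, f A =
      ∑ A ∈ (S.erase u).powerset, f A + ∑ A ∈ (S.erase u).powerset, f (insert u A) := by
  conv_lhs => rw [← Finset.insert_erase hu]
  exact Finset.sum_powerset_insert (Finset.notMem_erase u S) f

/-- The mean decrement of `h` when `u` is added to a random subset of `S.erase u`. -/
def meanDecrement (h : Finset V → ℝ) (S : Finset V) (u : V) (t : ℝ) : ℝ :=
  ∑ A ∈ (S.erase u).powerset, subsetWeight t (S.erase u) A * (h A - h (insert u A))

lemma continuous_meanDecrement (h : Finset V → ℝ) (S : Finset V) (u : V) :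
    Continuous (meanDecrement h S u) :=
  continuous_finsetSum _ fun A _ => (continuous_subsetWeight _ A).mul continuous_const

lemma sum_subsetWeight_mul_decrement (h : Finset V → ℝ) {S : Finset V} {u : V} (hu : u ∈ S)
    (t : ℝ) :
    ∑ A ∈ S.powerset, subsetWeight t S A * (h A - h (insert u A)) =
      (1 - t) * meanDecrement h S u t := by
  rw [sum_powerset_erase hu, meanDecrement, Finset.mul_sum]
  simp only [Finset.insert_idem, sub_self, mul_zero, Finset.sum_const_zero, add_zero]
  refine Finset.sum_congr rfl fun A hA => ?_
  have huA : u ∉ A := fun h' => Finset.notMem_erase u S (Finset.mem_powerset.1 hA h')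
  rw [subsetWeight, ← Finset.mul_prod_erase S _ hu, if_neg huA, subsetWeight]
  ring

lemma hasDerivAt_sum_subsetWeight (h : Finset V → ℝ) (S : Finset V) (t : ℝ) :
    HasDerivAt (fun t => ∑ A ∈ S.powerset, subsetWeight t S A * h A)
      (-∑ u ∈ S, meanDecrement h S u t) t := by
  have hd := HasDerivAt.fun_sum (u := S.powerset) fun A (_ : A ∈ S.powerset) =>
    (hasDerivAt_subsetWeight S A t).mul_const (h A)
  refine hd.congr_deriv (Eq.symm ?_)
  simp only [Finset.sum_mul]
  rw [Finset.sum_comm, ← Finset.sum_neg_distrib]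
  refine Finset.sum_congr rfl fun u hu => ?_
  rw [sum_powerset_erase hu, ← Finset.sum_add_distrib, meanDecrement,
    ← Finset.sum_neg_distrib]
  refine Finset.sum_congr rfl fun A hA => ?_
  have huA : u ∉ A := fun h' => Finset.notMem_erase u S (Finset.mem_powerset.1 hA h')
  rw [subsetWeight_insert_right t (Finset.notMem_erase u S), if_neg huA,
    if_pos (Finset.mem_insert_self u A)]
  ring

lemma subsetWeight_zero_sum (h : Finset V → ℝ) (S : Finset V) :
    ∑ A ∈ S.powerset, subsetWeight 0 S A * h A = h ∅ := by
  rw [Finset.sum_eq_single_of_mem ∅ (Finset.empty_mem_powerset S)]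
  · simp [subsetWeight]
  · intro A hA hne
    obtain ⟨v, hv⟩ := Finset.nonempty_iff_ne_empty.2 hne
    have : subsetWeight 0 S A = 0 :=
      Finset.prod_eq_zero (Finset.mem_powerset.1 hA hv) (if_pos hv)
    rw [this, zero_mul]

lemma sum_integral_decrement_le {h : Finset V → ℝ} (h0 : ∀ A, 0 ≤ h A) {S : Finset V}
    (hanti : ∀ u ∈ S, ∀ A, h (insert u A) ≤ h A) {ε : ℝ} (hε : ε ∈ Set.Icc (0 : ℝ) 1) :
    ∑ u ∈ S, ∫ t in (0 : ℝ)..ε, ∑ A ∈ S.powerset, subsetWeight t S A * (h A - h (insert u A))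
      ≤ h ∅ := by
  have hle : ∀ u ∈ S, ∫ t in (0 : ℝ)..ε,
      ∑ A ∈ S.powerset, subsetWeight t S A * (h A - h (insert u A)) ≤
      ∫ t in (0 : ℝ)..ε, meanDecrement h S u t := by
    intro u hu
    refine intervalIntegral.integral_mono_on hε.1
      (Continuous.intervalIntegrable (continuous_finsetSum _ fun A _ =>
        (continuous_subsetWeight _ A).mul continuous_const) _ _)
      ((continuous_meanDecrement h S u).intervalIntegrable _ _) fun t ht => ?_
    have ht1 : t ∈ Set.Icc (0 : ℝ) 1 := ⟨ht.1, ht.2.trans hε.2⟩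
    rw [sum_subsetWeight_mul_decrement h hu]
    have : 0 ≤ meanDecrement h S u t := Finset.sum_nonneg fun A _ =>
      mul_nonneg (subsetWeight_nonneg ht1 _ _) (sub_nonneg.2 (hanti u hu A))
    nlinarith [ht.1]
  have hcont : Continuous fun t => -∑ u ∈ S, meanDecrement h S u t :=
    (continuous_finsetSum _ fun u _ => continuous_meanDecrement h S u).neg
  have hftc := intervalIntegral.integral_eq_sub_of_hasDerivAt (a := 0) (b := ε)
    (fun t _ => hasDerivAt_sum_subsetWeight h S t) (hcont.intervalIntegrable _ _)
  rw [intervalIntegral.integral_neg, intervalIntegral.integral_finsetSum fun u _ =>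
    (continuous_meanDecrement h S u).intervalIntegrable _ _, subsetWeight_zero_sum] at hftc
  have hend : 0 ≤ ∑ A ∈ S.powerset, subsetWeight ε S A * h A :=
    Finset.sum_nonneg fun A _ => mul_nonneg (subsetWeight_nonneg hε _ _) (h0 A)
  linarith [Finset.sum_le_sum hle]

end RandomSubset

namespace Model

variable {X Y' V : Type*} [Fintype X] [Fintype Y'] {Q : X → X → Y' → ℝ} {E : Set (V × V)}

instance (M : Model X Y' Q E) : IsProbabilityMeasure M.P := M.probP

/-- All labels in `S` and all edge observations on edges inside `S`. -/
def localData (M : Model X Y' Q E) (S : Finset V) (ω : M.Ω) :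
    (S → X) × ({e ∈ S ×ˢ S | e ∈ E} → Y') :=
  (fun v => M.θ v ω, fun e => M.Yobs e ω)

lemma localData_preimage (M : Model X Y' Q E) (S : Finset V) (ω₀ : M.Ω) :
    M.localData S ⁻¹' {M.localData S ω₀} =
      {ω | (∀ v ∈ S, M.θ v ω = M.θ v ω₀) ∧
        ∀ e ∈ {e ∈ S ×ˢ S | e ∈ E}, M.Yobs e ω = M.Yobs e ω₀} := by
  ext ω
  simp [localData, funext_iff]

lemma measurableSet_atom (M : Model X Y' Q E) (S : Finset V) (F : Finset (V × V)) (σ : V → X)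
    (y : V × V → Y') :
    MeasurableSet {ω | (∀ v ∈ S, M.θ v ω = σ v) ∧ ∀ e ∈ F, M.Yobs e ω = y e} := by
  have h : {ω | (∀ v ∈ S, M.θ v ω = σ v) ∧ ∀ e ∈ F, M.Yobs e ω = y e} =
      (⋂ v ∈ S, M.θ v ⁻¹' {σ v}) ∩ ⋂ e ∈ F, M.Yobs e ⁻¹' {y e} := by
    ext ω
    simp
  rw [h]
  exact (Finset.measurableSet_biInter _ fun v _ => M.measθ v trivial).inter
    (Finset.measurableSet_biInter _ fun e _ => M.measY e trivial)

lemma measurableSet_localData_fiber (M : Model X Y' Q E) (S : Finset V)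
    (k : (S → X) × ({e ∈ S ×ˢ S | e ∈ E} → Y')) :
    MeasurableSet (M.localData S ⁻¹' {k}) := by
  by_cases hk : ∃ ω₀, M.localData S ω₀ = k
  · obtain ⟨ω₀, rfl⟩ := hk
    rw [localData_preimage]
    exact M.measurableSet_atom _ _ _ _
  · have : M.localData S ⁻¹' {k} = ∅ := by
      ext ω
      simpa using fun h => hk ⟨ω, h⟩
    rw [this]
    exact MeasurableSet.empty

lemma isSimpleRV_of_localData (M : Model X Y' Q E) (S : Finset V) {α : Type*} {Z : M.Ω → α}
    (h : ∀ ω ω', M.localData S ω = M.localData S ω' → Z ω = Z ω') : IsSimpleRV Z :=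
  IsSimpleRV.of_factor (M.measurableSet_localData_fiber S) h

lemma measureReal_le_lt_atom (M : Model X Y' Q E) {t : ℝ} (ht : t ∈ Set.Icc (0 : ℝ) 1)
    (N : Finset V) (S : Finset V) (F : Finset (V × V)) (σ : V → X) (y : V × V → Y') :
    ∀ T : Finset V, Disjoint T N →
      M.P.real {ω | (∀ v ∈ N, t < M.U v ω) ∧ (∀ v ∈ T, M.U v ω ≤ t) ∧
          (∀ v ∈ S, M.θ v ω = σ v) ∧ ∀ e ∈ F, M.Yobs e ω = y e} =
        (∏ _v ∈ T, t) * (∏ _v ∈ N, (1 - t)) *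
          M.P.real {ω | (∀ v ∈ S, M.θ v ω = σ v) ∧ ∀ e ∈ F, M.Yobs e ω = y e} := by
  induction N using Finset.induction_on with
  | empty =>
    intro T _
    have h := M.lawU T (fun _ => t) (fun _ => ht) S F σ y
    simpa [Measure.real] using h
  | insert v N hv ih =>
    intro T hT
    rw [Finset.disjoint_insert_right] at hT
    have h1 := ih T hT.2
    have h2 := ih (insert v T) (Finset.disjoint_insert_left.2 ⟨hv, hT.2⟩)
    have hm : MeasurableSet {ω | M.U v ω ≤ t} := measurableSet_le (M.measU v) measurable_const
    rw [← measureReal_inter_add_sdiff hm] at h1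
    rw [Finset.prod_insert hT.1] at h2
    rw [Finset.prod_insert hv]
    have e1 : {ω | (∀ v ∈ N, t < M.U v ω) ∧ (∀ v ∈ T, M.U v ω ≤ t) ∧
          (∀ v ∈ S, M.θ v ω = σ v) ∧ ∀ e ∈ F, M.Yobs e ω = y e} ∩ {ω | M.U v ω ≤ t} =
        {ω | (∀ v ∈ N, t < M.U v ω) ∧ (∀ w ∈ insert v T, M.U w ω ≤ t) ∧
          (∀ v ∈ S, M.θ v ω = σ v) ∧ ∀ e ∈ F, M.Yobs e ω = y e} := by
      ext ω
      simp only [Set.mem_inter_iff, Set.mem_ofPred_eq, Finset.forall_mem_insert]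
      tauto
    have e2 : {ω | (∀ v ∈ N, t < M.U v ω) ∧ (∀ v ∈ T, M.U v ω ≤ t) ∧
          (∀ v ∈ S, M.θ v ω = σ v) ∧ ∀ e ∈ F, M.Yobs e ω = y e} \ {ω | M.U v ω ≤ t} =
        {ω | (∀ w ∈ insert v N, t < M.U w ω) ∧ (∀ v ∈ T, M.U v ω ≤ t) ∧
          (∀ v ∈ S, M.θ v ω = σ v) ∧ ∀ e ∈ F, M.Yobs e ω = y e} := by
      ext ω
      simp only [Set.mem_sdiff, Set.mem_ofPred_eq, Finset.forall_mem_insert, not_le]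
      tauto
    rw [e1, e2, h2] at h1
    linear_combination h1

/-- The vertices of `S` whose label is revealed at level `t`. -/
def revealed (M : Model X Y' Q E) (t : ℝ) (S : Finset V) (ω : M.Ω) : Finset V :=
  {v ∈ S | M.U v ω ≤ t}

lemma measureReal_revealed_inter_atom (M : Model X Y' Q E) {t : ℝ}
    (ht : t ∈ Set.Icc (0 : ℝ) 1) {S A : Finset V} (hA : A ⊆ S) (F : Finset (V × V))
    (σ : V → X) (y : V × V → Y') :
    M.P.real (M.revealed t S ⁻¹' {A} ∩
        {ω | (∀ v ∈ S, M.θ v ω = σ v) ∧ ∀ e ∈ F, M.Yobs e ω = y e}) =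
      subsetWeight t S A *
        M.P.real {ω | (∀ v ∈ S, M.θ v ω = σ v) ∧ ∀ e ∈ F, M.Yobs e ω = y e} := by
  have h := M.measureReal_le_lt_atom ht (S \ A) S F σ y A Finset.disjoint_sdiff
  have hw : subsetWeight t S A = (∏ _v ∈ A, t) * ∏ _v ∈ S \ A, (1 - t) := by
    rw [subsetWeight, ← Finset.prod_sdiff hA, mul_comm]
    congr 1
    · exact Finset.prod_congr rfl fun v hv => if_pos hv
    · exact Finset.prod_congr rfl fun v hv => if_neg (Finset.mem_sdiff.1 hv).2
  rw [hw, ← h]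
  congr 1
  ext ω
  simp only [revealed, Set.mem_inter_iff, Set.mem_preimage, Set.mem_singleton_iff,
    Set.mem_ofPred_eq, Finset.ext_iff, Finset.mem_filter, Finset.mem_sdiff, ← and_assoc]
  refine and_congr_left fun _ => and_congr_left fun _ => ⟨fun h => ⟨?_, ?_⟩, ?_⟩
  · exact fun v hv => lt_of_not_ge fun hle => hv.2 ((h v).1 ⟨hv.1, hle⟩)
  · exact fun v hv => ((h v).2 hv).2
  · rintro ⟨h1, h2⟩ v
    exact ⟨fun hv => by_contra fun hn => (h1 v ⟨hv.1, hn⟩).not_ge hv.2,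
      fun hv => ⟨hA hv, h2 v hv⟩⟩

lemma measureReal_revealed_inter_fiber (M : Model X Y' Q E) {t : ℝ}
    (ht : t ∈ Set.Icc (0 : ℝ) 1) {S A : Finset V} (hA : A ⊆ S) {α : Type*} {Z : M.Ω → α}
    (hZ : ∀ ω ω', M.localData S ω = M.localData S ω' → Z ω = Z ω') (z : α) :
    M.P.real (M.revealed t S ⁻¹' {A} ∩ Z ⁻¹' {z}) =
      subsetWeight t S A * M.P.real (Z ⁻¹' {z}) := by
  have hW := M.measurableSet_localData_fiber S
  rw [← sum_measureReal_inter_fiber hW (s := Finset.univ) (fun _ => Finset.mem_univ _),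
    ← sum_measureReal_inter_fiber hW (s := Finset.univ) (fun _ => Finset.mem_univ _)
      (Z ⁻¹' {z}), Finset.mul_sum]
  refine Finset.sum_congr rfl fun k _ => ?_
  by_cases hk : ∃ ω₀, M.localData S ω₀ = k ∧ Z ω₀ = z
  · obtain ⟨ω₀, rfl, rfl⟩ := hk
    have hsub : M.localData S ⁻¹' {M.localData S ω₀} ⊆ Z ⁻¹' {Z ω₀} :=
      fun ω hω => hZ _ _ hω
    rw [Set.inter_left_comm, Set.inter_eq_left.2 hsub, localData_preimage]
    exact M.measureReal_revealed_inter_atom ht hA _ _ _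
  · have : M.localData S ⁻¹' {k} ∩ Z ⁻¹' {z} = ∅ := by
      ext ω
      simpa using fun h h' => hk ⟨ω, h, h'⟩
    rw [Set.inter_left_comm, this]
    simp

/-- The observations in `S` when exactly the labels in `A` are revealed. -/
def obsGiven (M : Model X Y' Q E) (S A : Finset V) (ω : M.Ω) :
    (V × V → Option Y') × (V → Option (Option X)) :=
  (fun e => if e ∈ E ∧ e.1 ∈ (S : Set V) ∧ e.2 ∈ (S : Set V) then some (M.Yobs e ω) else none,
    fun v => if v ∈ S then some (if v ∈ A then some (M.θ v ω) else none) else none)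

lemma obsRV_eq_obsGiven (M : Model X Y' Q E) (t : ℝ) (S : Finset V) (ω : M.Ω) :
    M.obsRV t S ω = M.obsGiven S (M.revealed t S ω) ω := by
  refine Prod.ext (funext fun e => by simp [obsRV, obsGiven]) (funext fun v => ?_)
  by_cases hv : v ∈ S <;> simp [obsRV, obsGiven, revealed, ξ, hv]

lemma obsGiven_eq_iff (M : Model X Y' Q E) {S A : Finset V} {ω ω' : M.Ω} :
    M.obsGiven S A ω = M.obsGiven S A ω' ↔
      (∀ e, e ∈ E ∧ e.1 ∈ (S : Set V) ∧ e.2 ∈ (S : Set V) → M.Yobs e ω = M.Yobs e ω') ∧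
        ∀ v ∈ S, v ∈ A → M.θ v ω = M.θ v ω' := by
  simp only [obsGiven, Prod.mk.injEq, funext_iff]
  refine and_congr (forall_congr' fun e => ?_) (forall_congr' fun v => ?_)
  · split_ifs with h <;> simp only [h, Option.some.injEq, and_self, true_imp_iff, false_imp_iff]
  · by_cases hS : v ∈ S <;> by_cases hA : v ∈ A <;> simp [hS, hA]

lemma obsGiven_insert_eq_iff (M : Model X Y' Q E) {S A : Finset V} {u : V} (hu : u ∈ S)
    {ω ω' : M.Ω} :
    M.obsGiven S (insert u A) ω = M.obsGiven S (insert u A) ω' ↔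
      M.θ u ω = M.θ u ω' ∧ M.obsGiven S A ω = M.obsGiven S A ω' := by
  simp only [obsGiven_eq_iff, Finset.mem_insert]
  constructor
  · exact fun h => ⟨h.2 u hu (Or.inl rfl), h.1, fun v hv hA => h.2 v hv (Or.inr hA)⟩
  · rintro ⟨h1, h2, h3⟩
    refine ⟨h2, fun _ hv hA => ?_⟩
    rcases hA with rfl | hA
    exacts [h1, h3 _ hv hA]

lemma label_eq_of_localData (M : Model X Y' Q E) {S : Finset V} {u : V} (hu : u ∈ S)
    (ω ω' : M.Ω) (h : M.localData S ω = M.localData S ω') : M.θ u ω = M.θ u ω' :=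
  congrFun (congrArg Prod.fst h) ⟨u, hu⟩

lemma thetaOn_eq_iff (M : Model X Y' Q E) {B : Set V} {ω ω' : M.Ω} :
    M.thetaOn B ω = M.thetaOn B ω' ↔ ∀ v ∈ B, M.θ v ω = M.θ v ω' := by
  simp only [thetaOn, funext_iff]
  refine forall_congr' fun v => ?_
  split_ifs with h <;> simp [h]

lemma thetaOn_eq_of_localData (M : Model X Y' Q E) {S : Finset V} {B : Set V}
    (hB : B ⊆ S) (ω ω' : M.Ω) (h : M.localData S ω = M.localData S ω') :
    M.thetaOn B ω = M.thetaOn B ω' :=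
  M.thetaOn_eq_iff.2 fun _ hv => M.label_eq_of_localData (hB hv) _ _ h

lemma obsGiven_eq_of_localData (M : Model X Y' Q E) (S A : Finset V) (ω ω' : M.Ω)
    (h : M.localData S ω = M.localData S ω') :
    M.obsGiven S A ω = M.obsGiven S A ω' := by
  refine M.obsGiven_eq_iff.2 ⟨fun e he => ?_, fun v hv _ => M.label_eq_of_localData hv _ _ h⟩
  refine congrFun (congrArg Prod.snd h) ⟨e, ?_⟩
  simpa [and_comm] using he

lemma entropy_prod_obsRV (M : Model X Y' Q E) {t : ℝ} (ht : t ∈ Set.Icc (0 : ℝ) 1)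
    (S : Finset V) {α β : Type*} {Z : M.Ω → α}
    (hZ : ∀ ω ω', M.localData S ω = M.localData S ω' → Z ω = Z ω')
    (f : α → (V × V → Option Y') × (V → Option (Option X)) → β)
    (g : β → (V × V → Option Y') × (V → Option (Option X))) (hg : ∀ a c, g (f a c) = c) :
    entropy M.P (fun ω => f (Z ω) (M.obsRV t S ω)) =
      ∑ A ∈ S.powerset, subsetWeight t S A *
          entropy M.P (fun ω => f (Z ω) (M.obsGiven S A ω)) +
        ∑ A ∈ S.powerset, Real.negMulLog (subsetWeight t S A) := by
  have hloc : ∀ A ω ω', M.localData S ω = M.localData S ω' →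
      f (Z ω) (M.obsGiven S A ω) = f (Z ω') (M.obsGiven S A ω') := fun A ω ω' h => by
    rw [hZ _ _ h, M.obsGiven_eq_of_localData S A _ _ h]
  refine entropy_mixture (R := M.revealed t S) (Zi := fun A ω => f (Z ω) (M.obsGiven S A ω))
    (fun ω => Finset.mem_powerset.2 (Finset.filter_subset _ _))
    (fun ω => by rw [obsRV_eq_obsGiven])
    (fun b => {v ∈ S | ∃ x, (g b).2 v = some (some x)}) (fun A hA ω => ?_)
    (fun A _ => M.isSimpleRV_of_localData S (hloc A))
    (fun A hA z => M.measureReal_revealed_inter_fiber ht (Finset.mem_powerset.1 hA) (hloc A) z)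
  ext v
  simp only [hg, obsGiven, Finset.mem_filter]
  constructor
  · rintro ⟨hv, x, hx⟩
    by_contra hn
    simp [hv, hn] at hx
  · intro hv
    have hvS := Finset.mem_powerset.1 hA hv
    exact ⟨hvS, M.θ v ω, by simp [hv, hvS]⟩

/-- The conditional entropy of the labels on `B` given the edge observations in `S` and the
labels on `A`. -/
def residualEntropy (M : Model X Y' Q E) (S : Finset V) (B : Set V) (A : Finset V) : ℝ :=
  entropy M.P (fun ω => (M.thetaOn B ω, M.obsGiven S A ω)) - entropy M.P (M.obsGiven S A)

lemma condMI_obsGiven (M : Model X Y' Q E) {S : Finset V} {u : V} (hu : u ∈ S) (B : Set V)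
    (A : Finset V) :
    condMI M.P (M.θ u) (M.thetaOn B) (M.obsGiven S A) =
      M.residualEntropy S B A - M.residualEntropy S B (insert u A) := by
  have h1 : entropy M.P (M.obsGiven S (insert u A)) =
      entropy M.P (fun ω => (M.θ u ω, M.obsGiven S A ω)) :=
    entropy_congr_ker _ fun ω ω' => by
      simp only [Prod.mk.injEq, M.obsGiven_insert_eq_iff hu]
  have h2 : entropy M.P (fun ω => (M.thetaOn B ω, M.obsGiven S (insert u A) ω)) =
      entropy M.P (fun ω => (M.θ u ω, M.thetaOn B ω, M.obsGiven S A ω)) :=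
    entropy_congr_ker _ fun ω ω' => by
      simp only [Prod.mk.injEq, M.obsGiven_insert_eq_iff hu]
      tauto
  rw [condMI, residualEntropy, residualEntropy, h1, h2]
  ring

lemma condMI_obsRV (M : Model X Y' Q E) {t : ℝ} (ht : t ∈ Set.Icc (0 : ℝ) 1)
    {S : Finset V} {u : V} (hu : u ∈ S) {B : Set V} (hB : B ⊆ S) :
    condMI M.P (M.θ u) (M.thetaOn B) (M.obsRV t S) =
      ∑ A ∈ S.powerset, subsetWeight t S A *
        (M.residualEntropy S B A - M.residualEntropy S B (insert u A)) := by
  have hθ := M.label_eq_of_localData hu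
  have hτ := M.thetaOn_eq_of_localData hB
  have h1 := M.entropy_prod_obsRV ht S hθ (fun a c => (a, c)) Prod.snd fun _ _ => rfl
  have h2 := M.entropy_prod_obsRV ht S hτ (fun a c => (a, c)) Prod.snd fun _ _ => rfl
  have h3 := M.entropy_prod_obsRV ht S (Z := fun ω => (M.θ u ω, M.thetaOn B ω))
    (fun ω ω' h => by rw [hθ _ _ h, hτ _ _ h]) (fun a c => (a.1, a.2, c)) (fun b => b.2.2)
    fun _ _ => rfl
  have h4 := M.entropy_prod_obsRV ht S (Z := fun _ => ()) (fun _ _ _ => rfl)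
    (fun _ c => c) id fun _ _ => rfl
  simp only [← M.condMI_obsGiven hu, condMI, mul_sub, mul_add, Finset.sum_sub_distrib,
    Finset.sum_add_distrib]
  simp only at h1 h2 h3 h4
  rw [h1, h2, h3, h4]
  ring

lemma entropy_thetaOn (M : Model X Y' Q E) [Nonempty X] (B : Finset V) :
    entropy M.P (M.thetaOn B) = Real.log (Fintype.card X) * B.card := by
  have hs : IsSimpleRV (M.thetaOn (B : Set V)) :=
    M.isSimpleRV_of_localData B (M.thetaOn_eq_of_localData subset_rfl)
  rw [entropy_of_uniform hs (c := ((Fintype.card X : ℝ)⁻¹) ^ B.card)]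
  · rw [Real.log_pow, Real.log_inv]
    ring
  · intro ω₀
    have hY : Nonempty (V × V → Y') := ⟨fun e => M.Yobs e ω₀⟩
    have h := M.lawθY B ∅ (by simp) (fun v => M.θ v ω₀) hY.some
    have he : M.thetaOn (B : Set V) ⁻¹' {M.thetaOn B ω₀} =
        {ω | (∀ v ∈ B, M.θ v ω = M.θ v ω₀) ∧ ∀ e ∈ (∅ : Finset (V × V)),
          M.Yobs e ω = hY.some e} := by
      ext ω
      simp [thetaOn_eq_iff]
    rw [he, Measure.real, h]
    simp

end Model

/-- Lemma: mutual information bound. The integrated conditional mutual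
information between interior labels and boundary labels given the observations in S is
bounded by log|X| times the size of the boundary. -/
theorem statement_6
    {X Y' V : Type*} [Fintype X] [Fintype Y'] [Nonempty X]
    (hcard : 2 ≤ Fintype.card X)
    (Q : X → X → Y' → ℝ)
    (hQ0 : ∀ x1 x2 y, 0 ≤ Q x1 x2 y) (hQ1 : ∀ x1 x2, ∑ y, Q x1 x2 y = 1)
    (E : Set (V × V))
    (hloop : ∀ e ∈ E, e.1 ≠ e.2)
    (hori : ∀ u v : V, (u, v) ∈ E → (v, u) ∉ E)
    (M : Model X Y' Q E)
    (hlf : LocallyFiniteGraph (graphOf E))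
    (S : Finset V) (hS : S.Nonempty) :
    ∀ ε ∈ Set.Icc (0:ℝ) 1,
      ∑ u ∈ S, (∫ ε' in (0:ℝ)..ε,
          condMI M.P (M.θ u) (M.thetaOn (vBoundary (graphOf E) ↑S)) (M.obsRV ε' ↑S))
        ≤ Real.log (Fintype.card X) * ((vBoundary (graphOf E) ↑S).ncard : ℝ) := by
  intro ε hε
  have hB : vBoundary (graphOf E) ↑S ⊆ (S : Set V) := fun v hv => hv.1
  have hsB := M.isSimpleRV_of_localData S (M.thetaOn_eq_of_localData hB)
  have hsO := fun A => M.isSimpleRV_of_localData S (M.obsGiven_eq_of_localData S A)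
  calc
    _ = ∑ u ∈ S, ∫ t in (0 : ℝ)..ε, ∑ A ∈ S.powerset, subsetWeight t S A *
          (M.residualEntropy S (vBoundary (graphOf E) ↑S) A -
            M.residualEntropy S (vBoundary (graphOf E) ↑S) (insert u A)) := by
      refine Finset.sum_congr rfl fun u hu => intervalIntegral.integral_congr fun t ht => ?_
      rw [Set.uIcc_of_le hε.1] at ht
      exact M.condMI_obsRV ⟨ht.1, ht.2.trans hε.2⟩ hu hB
    _ ≤ M.residualEntropy S (vBoundary (graphOf E) ↑S) ∅ := by
      refine sum_integral_decrement_le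
        (fun A => sub_nonneg.2 (entropy_le_entropy_prod hsB (hsO A))) (fun u hu A => ?_) hε
      refine sub_nonneg.1 ((M.condMI_obsGiven hu _ A).symm ▸ ?_)
      exact condMI_nonneg (M.isSimpleRV_of_localData S (M.label_eq_of_localData hu)) hsB (hsO A)
    _ ≤ entropy M.P (M.thetaOn (vBoundary (graphOf E) ↑S)) := by
      rw [Model.residualEntropy, sub_le_iff_le_add]
      exact entropy_prod_le_add hsB (hsO ∅)
    _ = _ := by
      have hfin := S.finite_toSet.subset hB
      have h := M.entropy_thetaOn hfin.toFinset
      rwa [hfin.coe_toFinset, ← Set.ncard_eq_toFinset_card _ hfin] at h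

end
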